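/- Let n ≥ 4 and let K_1, …, K_m be nonempty compact convex subsets of ℝ^n with m = ⌊n/2⌋ − 2. Then there exist pairwise orthogonal unit vectors v_1, v_2, v_3, v_4 ∈ ℝ^n such that for every i, w_{K_i}(v_1) = w_{K_i}(v_2) and w_{K_i}(v_3) = w_{K_i}(v_4). (Equivalently, there is an orthogonal decomposition ℝ^n = ℝ^2 ⊕ ℝ^2 ⊕ ℝ^{n-4} such that each region is inscribed in S × S × ℝ^{n-4} where S is a square.) -/

import Mathlib

open scoped RealInnerProductSpace

/-- The width of a set `K ⊆ ℝⁿ` in direction `v`: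
`w_K(v) = sup_{x ∈ K} ⟪x, v⟫ − inf_{x ∈ K} ⟪x, v⟫`. -/
noncomputable def dirWidth {n : ℕ} (K : Set (EuclideanSpace ℝ (Fin n)))
    (v : EuclideanSpace ℝ (Fin n)) : ℝ :=
  sSup ((fun x => ⟪x, v⟫) '' K) - sInf ((fun x => ⟪x, v⟫) '' K)

namespace BU

/-- pairing of a mod 2 chain with a cochain -/
def ev {E : Type*} (c : List (List E)) (φ : List E → ZMod 2) : ZMod 2 := (c.map φ).sum

/-- coboundary -/
def dl {E : Type*} : (List E → ZMod 2) → List E → ZMod 2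
  | _, [] => 0
  | φ, x :: u => φ u + dl (fun v => φ (x :: v)) u

/-- prism operator -/
def pr {E : Type*} (f g : E → E) : List E → List (List E)
  | [] => []
  | x :: u => (f x :: g x :: u.map g) :: (pr f g u).map (fun v => f x :: v)

section
variable {E : Type*}

lemma z2 (a : ZMod 2) : a + a = 0 := CharTwo.add_self_eq_zero a

@[simp] lemma ev_nil (φ : List E → ZMod 2) : ev [] φ = 0 := rfl

@[simp] lemma ev_cons (u : List E) (c) (φ : List E → ZMod 2) : ev (u :: c) φ = φ u + ev c φ := by
  simp [ev]

lemma ev_append (c d : List (List E)) (φ : List E → ZMod 2) : ev (c ++ d) φ = ev c φ + ev d φ := by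
  simp [ev]

lemma ev_map (c : List (List E)) (f : List E → List E) (φ : List E → ZMod 2) :
    ev (c.map f) φ = ev c (fun u => φ (f u)) := by
  simp [ev, Function.comp_def]

lemma ev_add (c : List (List E)) (φ ψ : List E → ZMod 2) :
    ev c (fun u => φ u + ψ u) = ev c φ + ev c ψ := by
  induction c with
  | nil => simp
  | cons u c ih => simp only [ev_cons, ih]; ring

lemma ev_congr (c : List (List E)) (φ ψ : List E → ZMod 2) (h : ∀ u ∈ c, φ u = ψ u) :
    ev c φ = ev c ψ := by
  unfold ev; rw [List.map_congr_left h]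

lemma dl_add (u : List E) : ∀ (φ ψ : List E → ZMod 2),
    dl (fun v => φ v + ψ v) u = dl φ u + dl ψ u := by
  induction u with
  | nil => intros; simp [dl]
  | cons x u ih => intro φ ψ; simp only [dl, ih]; ring

lemma dl_mul (a : ZMod 2) (u : List E) : ∀ (φ : List E → ZMod 2),
    dl (fun v => a * φ v) u = a * dl φ u := by
  induction u with
  | nil => intros; simp [dl]
  | cons x u ih => intro φ; simp only [dl, ih]; ring

lemma dl_congr (u : List E) : ∀ (φ ψ : List E → ZMod 2)
    (_ : ∀ v, v.length + 1 = u.length → φ v = ψ v), dl φ u = dl ψ u := by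
  induction u with
  | nil => intros; simp [dl]
  | cons x u ih =>
    intro φ ψ h
    simp only [dl]
    rw [h u (by simp), ih (fun v => φ (x :: v)) (fun v => ψ (x :: v))]
    intro v hv
    exact h _ (by simp [hv])

lemma dl_map (f : E → E) (u : List E) : ∀ (φ : List E → ZMod 2),
    dl φ (u.map f) = dl (fun v => φ (v.map f)) u := by
  induction u with
  | nil => intros; simp [dl]
  | cons x u ih => intro φ; simp only [dl, List.map_cons, ih]

lemma prism (f g : E → E) (u : List E) : ∀ (φ : List E → ZMod 2),
    ev (pr f g u) (dl φ) + dl (fun v => ev (pr f g v) φ) u = φ (u.map f) + φ (u.map g) := by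
  induction u with
  | nil => intro φ; simp [dl, pr, z2]
  | cons x u ih =>
    intro φ
    have h1 := ih (fun v => φ (f x :: v))
    have h2 := dl_map g u (fun v => φ (f x :: g x :: v))
    simp only [pr, dl, ev_cons, ev_map, List.map_cons, ev_add, dl_add]
    have e1 := z2 (φ (f x :: u.map g))
    have e2 := z2 (ev (pr f g u) φ)
    rw [h2]
    have e3 := z2 (dl (fun v => φ (f x :: g x :: v.map g)) u)
    linear_combination h1 + e1 + e2 + e3

lemma pr_mem (f g : E → E) (u : List E) : ∀ v ∈ pr f g u,
    v.length = u.length + 1 ∧ ∀ y ∈ v, ∃ x ∈ u, y = f x ∨ y = g x := by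
  induction u with
  | nil => simp [pr]
  | cons x u ih =>
    intro v hv
    simp only [pr, List.mem_cons, List.mem_map] at hv
    rcases hv with rfl | ⟨w, hw, rfl⟩
    · refine ⟨by simp, ?_⟩
      intro y hy
      simp only [List.mem_cons, List.mem_map] at hy
      rcases hy with rfl | rfl | ⟨z, hz, rfl⟩
      · exact ⟨x, by simp⟩
      · exact ⟨x, by simp⟩
      · exact ⟨z, by simp [hz]⟩
    · obtain ⟨h1, h2⟩ := ih w hw
      refine ⟨by simp [h1], ?_⟩
      intro y hy
      rcases List.mem_cons.1 hy with rfl | hy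
      · exact ⟨x, by simp⟩
      · obtain ⟨z, hz, h⟩ := h2 y hy
        exact ⟨z, by simp [hz], h⟩

lemma tele (F : ℕ → E → E) (L : List (List E)) (hL : ∀ ψ, ev L (dl ψ) = 0) (N : ℕ) :
    ∃ C : List (List E),
      (∀ φ, ev C (dl φ) = ev L (fun u => φ (u.map (F 0))) + ev L (fun u => φ (u.map (F N)))) ∧
      ∀ v ∈ C, ∃ u ∈ L, ∃ j < N, v ∈ pr (F j) (F (j + 1)) u := by
  induction N with
  | zero => exact ⟨[], fun φ => by simp [z2], by simp⟩
  | succ N ih =>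
    obtain ⟨C, h1, h2⟩ := ih
    refine ⟨C ++ L.flatMap (pr (F N) (F (N + 1))), fun φ => ?_, ?_⟩
    · have key : ∀ M : List (List E), ev (M.flatMap (pr (F N) (F (N + 1)))) (dl φ) +
          ev M (dl (fun v => ev (pr (F N) (F (N + 1)) v) φ)) =
          ev M (fun u => φ (u.map (F N))) + ev M (fun u => φ (u.map (F (N + 1)))) := by
        intro M
        induction M with
        | nil => simp
        | cons u M ihM =>
          simp only [List.flatMap_cons, ev_append, ev_cons]
          have := prism (F N) (F (N + 1)) u φ
          linear_combination this + ihM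
      have k := key L
      rw [hL] at k
      rw [ev_append, h1]
      have := z2 (ev L (fun u => φ (u.map (F N))))
      linear_combination k + this
    · intro v hv
      rcases List.mem_append.1 hv with hv | hv
      · obtain ⟨u, hu, j, hj, h⟩ := h2 v hv
        exact ⟨u, hu, j, by omega, h⟩
      · obtain ⟨u, hu, h⟩ := List.mem_flatMap.1 hv
        exact ⟨u, hu, N, by omega, h⟩

/-- product cocycle -/
def W (s : ℕ → E → ZMod 2) : List E → ZMod 2
  | [] => 0
  | [_] => 1
  | x :: y :: u => (s u.length x + s u.length y) * W s (y :: u)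

/-- primitive -/
def Ph (s : ℕ → E → ZMod 2) : List E → ZMod 2
  | [] => 0
  | x :: u => s u.length x * W s (x :: u)

lemma dl_W (s : ℕ → E → ZMod 2) (u : List E) : ∀ x y, dl (W s) (x :: y :: u) = 0 := by
  induction u with
  | nil => intro x y; simp [dl, W, z2]
  | cons z t ih =>
    intro x y
    have h := ih y z
    rw [dl] at h
    have e : dl (fun v => W s (x :: y :: v)) (z :: t) =
        (s t.length x + s t.length y) * dl (fun v => W s (y :: v)) (z :: t) := by
      rw [← dl_mul]
      apply dl_congr
      intro v hv
      have : v.length = t.length := by simpa using hv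
      simp [W, this]
    rw [dl, dl, e]
    simp only [W]
    have e1 := z2 (s t.length z)
    have e2 := z2 (s t.length x)
    have e3 := z2 (s t.length y)
    have e4 := z2 (W s (z :: t))
    linear_combination (s t.length x + s t.length y) * h + e1 * W s (z :: t)

lemma dl_Ph (s : ℕ → E → ZMod 2) (u : List E) (x y : E) :
    dl (Ph s) (x :: y :: u) = W s (x :: y :: u) := by
  have h := dl_W s u x y
  rw [dl] at h
  have e : dl (fun v => Ph s (x :: v)) (y :: u) =
      s u.length x * dl (fun v => W s (x :: v)) (y :: u) := by
    rw [← dl_mul]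
    apply dl_congr
    intro v hv
    have : v.length = u.length := by simpa using hv
    simp [Ph, this]
  rw [dl, e]
  simp only [Ph, W]
  have e1 := z2 (s u.length x * W s (y :: u))
  linear_combination s u.length x * h - e1

lemma W_ne (s : ℕ → E → ZMod 2) (u : List E) : W s u ≠ 0 → ∀ i, i + 1 < u.length →
    ∃ x ∈ u, ∃ y ∈ u, s i x ≠ s i y := by
  induction u with
  | nil => simp [W]
  | cons x u ih =>
    cases u with
    | nil => simp
    | cons y u =>
      intro h i hi
      rw [W] at h
      have h1 := left_ne_zero_of_mul h
      have h2 := right_ne_zero_of_mul h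
      by_cases hh : i + 1 < (y :: u).length
      · obtain ⟨a, ha, b, hb, hab⟩ := ih h2 i hh
        exact ⟨a, List.mem_cons_of_mem _ ha, b, List.mem_cons_of_mem _ hb, hab⟩
      · have : i = u.length := by simp at hi hh; omega
        subst this
        refine ⟨x, by simp, y, by simp, fun e => h1 (by rw [e]; exact z2 _)⟩

lemma W_neg [Neg E] (s : ℕ → E → ZMod 2) (u : List E) (h : ∀ i, ∀ x ∈ u, s i (-x) = s i x + 1) :
    W s (u.map (fun x => -x)) = W s u := by
  induction u with
  | nil => simp [W]
  | cons x u ih =>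
    have ih := ih (fun i z hz => h i z (List.mem_cons_of_mem _ hz))
    cases u with
    | nil => simp [W]
    | cons y u =>
      simp only [List.map_cons, W, List.length_map] at ih ⊢
      rw [ih, h _ x (by simp), h _ y (by simp)]
      have := z2 (1 : ZMod 2)
      linear_combination this * W s (y :: u)

lemma Ph_neg [Neg E] (s : ℕ → E → ZMod 2) (u : List E) (h : ∀ i, ∀ x ∈ u, s i (-x) = s i x + 1) :
    Ph s u + Ph s (u.map (fun x => -x)) = W s u := by
  cases u with
  | nil => simp [W, Ph]
  | cons x u =>
    have e := W_neg s _ h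
    simp only [List.map_cons, Ph, List.length_map] at e ⊢
    rw [e, h _ x (by simp)]
    have := z2 (s u.length x)
    linear_combination this * W s (x :: u)

end

section
variable {E : Type*} [NormedAddCommGroup E] [InnerProductSpace ℝ E]

/-- rotation towards a pole -/
noncomputable def rot (e : E) (t : ℝ) (x : E) : E := Real.cos t • x + Real.sin t • e

lemma rot_norm (e x : E) (t : ℝ) (he : ‖e‖ = 1) (hx : ‖x‖ = 1) (h : ⟪x, e⟫ = 0) :
    ‖rot e t x‖ = 1 := by
  have : ‖rot e t x‖ * ‖rot e t x‖ = 1 := by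
    unfold rot
    rw [norm_add_mul_self_real, norm_smul, norm_smul, real_inner_smul_left, real_inner_smul_right,
      h, he, hx]
    simp only [Real.norm_eq_abs, mul_one, mul_zero, add_zero, abs_mul_abs_self]
    nlinarith [Real.sin_sq_add_cos_sq t]
  nlinarith [norm_nonneg (rot e t x)]

lemma rot_dist (e x y : E) (s t : ℝ) (he : ‖e‖ = 1) (hy : ‖y‖ = 1) :
    dist (rot e s x) (rot e t y) ≤ dist x y + 2 * |s - t| := by
  rw [dist_eq_norm, dist_eq_norm]
  have : rot e s x - rot e t y = Real.cos s • (x - y) + ((Real.cos s - Real.cos t) • y +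
      (Real.sin s - Real.sin t) • e) := by
    unfold rot; module
  rw [this]
  refine (norm_add_le _ _).trans (add_le_add ?_ ((norm_add_le _ _).trans ?_))
  · rw [norm_smul]
    exact mul_le_of_le_one_left (norm_nonneg _) (Real.abs_cos_le_one s)
  · rw [norm_smul, norm_smul, he, hy, two_mul]
    simp only [Real.norm_eq_abs, mul_one]
    refine add_le_add ?_ ?_
    · have := Real.lipschitzWith_cos.dist_le_mul s t
      simpa [Real.dist_eq] using this
    · have := Real.lipschitzWith_sin.dist_le_mul s t
      simpa [Real.dist_eq] using this

lemma step (m : ℕ) (e : ℕ → E) (he : ∀ i ≤ m, ‖e i‖ = 1)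
    (hee : ∀ i j, i ≤ m → j ≤ m → i ≠ j → ⟪e i, e j⟫ = 0)
    (V : Submodule ℝ E) (hV : ∀ i ≤ m, e i ∈ V)
    (s : ℕ → E → ZMod 2) (hs : ∀ i x, ‖x‖ = 1 → s i (-x) = s i x + 1) (k : ℕ) (hk : k ≤ m) :
    ∀ ε > 0, ∃ c : List (List E),
      (∀ u ∈ c, u.length = k + 1 ∧ (∀ x ∈ u, ‖x‖ = 1 ∧ x ∈ V ∧ ∀ j ≤ m, k < j → ⟪x, e j⟫ = 0) ∧
        ∀ x ∈ u, ∀ y ∈ u, dist x y < ε) ∧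
      (∀ ψ, ev c (dl ψ) + ev c (fun u => dl ψ (u.map (fun x => -x))) = 0) ∧
      ev c (W s) = 1 := by
  induction k with
  | zero =>
    intro ε hε
    refine ⟨[[e 0]], ?_, ?_, ?_⟩
    · simp only [List.mem_singleton, forall_eq, List.length_singleton, zero_add, true_and]
      refine ⟨⟨he 0 hk, hV 0 hk, fun j hj h0 => hee 0 j hk hj (by omega)⟩, by simpa using hε⟩
    · intro ψ; simp [dl, z2]
    · simp [W]
  | succ k ih =>
    intro ε hε
    obtain ⟨c, hc1, hc2, hc3⟩ := ih (by omega) (ε / 2) (by positivity)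
    obtain ⟨N, hN⟩ := exists_nat_gt (2 * Real.pi / ε)
    have hN0 : (0 : ℝ) < N := lt_trans (by have := Real.pi_pos; positivity) hN
    set F : ℕ → E → E := fun j => rot (e (k + 1)) (j * (Real.pi / (2 * N))) with hF
    set L := c ++ c.map (List.map (fun x => -x)) with hLdef
    have hL1 : ∀ u ∈ L, u.length = k + 1 ∧
        (∀ x ∈ u, ‖x‖ = 1 ∧ x ∈ V ∧ ∀ j ≤ m, k < j → ⟪x, e j⟫ = 0) ∧
        ∀ x ∈ u, ∀ y ∈ u, dist x y < ε / 2 := by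
      intro u hu
      rcases List.mem_append.1 hu with hu | hu
      · exact hc1 u hu
      · obtain ⟨w, hw, rfl⟩ := List.mem_map.1 hu
        obtain ⟨h1, h2, h3⟩ := hc1 w hw
        refine ⟨by simp [h1], ?_, ?_⟩
        · intro x hx
          obtain ⟨z, hz, rfl⟩ := List.mem_map.1 hx
          obtain ⟨a1, a2, a3⟩ := h2 z hz
          refine ⟨by simpa using a1, V.neg_mem a2, fun j hj hkj => ?_⟩
          rw [inner_neg_left, a3 j hj hkj, neg_zero]
        · intro x hx y hy
          obtain ⟨z, hz, rfl⟩ := List.mem_map.1 hx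
          obtain ⟨z', hz', rfl⟩ := List.mem_map.1 hy
          simpa using h3 z hz z' hz'
    have hLev : ∀ φ, ev L φ = ev c φ + ev c (fun u => φ (u.map (fun x => -x))) := by
      intro φ; rw [hLdef, ev_append, ev_map]
    obtain ⟨C, hC1, hC2⟩ := tele F L (fun ψ => by rw [hLev]; exact hc2 ψ) N
    have hF0 : F 0 = id := by
      funext x; simp [hF, rot]
    have hFN : F N = fun _ => e (k + 1) := by
      funext x
      have : (N : ℝ) * (Real.pi / (2 * N)) = Real.pi / 2 := by field_simp
      simp [hF, rot, this]
    have hbd : ∀ φ, ev C (dl φ) = ev c φ + ev c (fun u => φ (u.map (fun x => -x))) := by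
      intro φ
      have : ev L (fun u => φ (u.map (F N))) = 0 := by
        rw [ev_congr L _ (fun _ => φ (List.replicate (k + 1) (e (k + 1)))), hLev, z2]
        intro u hu
        simp only [hFN]
        rw [List.map_const', (hL1 u hu).1]
      rw [hC1, this, hF0]
      simp [hLev]
    have hlen : ∀ u ∈ C, u.length = k + 1 + 1 := by
      intro v hv
      obtain ⟨u, hu, j, hj, h⟩ := hC2 v hv
      rw [(pr_mem _ _ _ v h).1, (hL1 u hu).1]
    refine ⟨C, fun v hv => ⟨hlen v hv, ?_⟩, ?_, ?_⟩
    · obtain ⟨u, hu, j, hj, h⟩ := hC2 v hv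
      obtain ⟨-, h2⟩ := pr_mem _ _ _ v h
      have h3 : ∀ y ∈ v, ∃ x ∈ u, ∃ i, (i = j ∨ i = j + 1) ∧ y = F i x := by
        intro y hy
        obtain ⟨x, hx, h | h⟩ := h2 y hy
        · exact ⟨x, hx, j, by simp, h⟩
        · exact ⟨x, hx, j + 1, by simp, h⟩
      obtain ⟨-, b1, b2⟩ := hL1 u hu
      constructor
      · intro y hy
        obtain ⟨x, hx, i, -, rfl⟩ := h3 y hy
        obtain ⟨a1, a2, a3⟩ := b1 x hx
        refine ⟨rot_norm _ _ _ (he _ hk) a1 (a3 _ hk (by omega)),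
          V.add_mem (V.smul_mem _ a2) (V.smul_mem _ (hV _ hk)), fun l hl hkl => ?_⟩
        simp only [hF, rot]
        rw [inner_add_left, real_inner_smul_left, real_inner_smul_left, a3 l hl (by omega),
          hee _ _ hk hl (by omega)]
        simp
      · intro y hy y' hy'
        obtain ⟨x, hx, i, hi, rfl⟩ := h3 y hy
        obtain ⟨x', hx', i', hi', rfl⟩ := h3 y' hy'
        have hd := rot_dist (e (k + 1)) x x' (i * (Real.pi / (2 * N))) (i' * (Real.pi / (2 * N)))
          (he _ hk) (b1 x' hx').1
        have hx := b2 x hx x' hx'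
        have hab : |(i : ℝ) - i'| ≤ 1 := by
          rcases hi with rfl | rfl <;> rcases hi' with rfl | rfl <;> simp
        rw [← sub_mul, abs_mul, abs_of_pos (by have := Real.pi_pos; positivity :
          0 < Real.pi / (2 * N))] at hd
        have : Real.pi / (2 * N) < ε / 4 := by
          rw [div_lt_iff₀ hε] at hN
          rw [div_lt_iff₀ (by positivity)]
          linarith
        have h4 : |(i : ℝ) - i'| * (Real.pi / (2 * N)) ≤ Real.pi / (2 * N) :=
          mul_le_of_le_one_left (by have := Real.pi_pos; positivity) hab
        simp only [hF]
        linarith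
    · intro ψ
      have : (fun u : List E => dl ψ (u.map (fun x => -x))) =
          dl (fun v => ψ (v.map (fun x => -x))) := by
        funext u; exact dl_map _ _ _
      rw [this, hbd, hbd]
      have e1 := z2 (ev c ψ)
      have e2 := z2 (ev c (fun u => ψ (u.map (fun x => -x))))
      simp only [List.map_map, Function.comp_def, neg_neg, List.map_id']
      linear_combination e1 + e2
    · rw [ev_congr C (W s) (dl (Ph s)), hbd, ← ev_add, ← hc3]
      · apply ev_congr
        intro u hu
        exact Ph_neg s u (fun i x hx => hs i x ((hc1 u hu).2.1 x hx).1)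
      · intro u hu
        have := hlen u hu
        match u, this with
        | x :: y :: t, _ => exact (dl_Ph s t x y).symm

end

section
variable {E : Type*} [NormedAddCommGroup E] [InnerProductSpace ℝ E]

lemma exists_sign (g : E → ℝ) (hg : ∀ x, g (-x) = - g x) :
    ∃ s : E → ZMod 2, (∀ x, ‖x‖ = 1 → s (-x) = s x + 1) ∧
      ∀ x y, s x ≠ s y → g x * g y ≤ 0 := by
  classical
  let _ : LinearOrder E := linearOrderOfSTO WellOrderingRel
  refine ⟨fun x => if 0 < g x ∨ (g x = 0 ∧ x < -x) then 1 else 0, ?_, ?_⟩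
  · intro x hx
    have hne : x ≠ -x := by
      intro h
      have : x = 0 := by
        have h2 : (2 : ℝ) • x = 0 := by rw [two_smul]; exact add_eq_zero_iff_eq_neg.2 h
        simpa using h2
      simp [this] at hx
    have h11 : (1 : ZMod 2) + 1 = 0 := z2 1
    simp only [hg, neg_neg]
    rcases lt_trichotomy (g x) 0 with h | h | h
    · simp [h, h.le, h.ne, not_lt.2 h.le]
    · rcases lt_or_gt_of_ne hne with h' | h'
      · simp [h, h', not_lt.2 h'.le, h11]
      · simp [h, h', not_lt.2 h'.le]
    · simp [h, h.le, h.ne', not_lt.2 h.le, h11]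
  · intro x y h
    by_contra! hc
    apply h
    rcases lt_trichotomy (g x) 0 with h | h | h
    · have : g y < 0 := by nlinarith
      simp [h.ne, this.ne, not_lt.2 h.le, not_lt.2 this.le]
    · simp [h] at hc
    · have : 0 < g y := by nlinarith
      simp [h, this]

/-- A form of the Borsuk-Ulam theorem. -/
lemma borsuk_ulam [FiniteDimensional ℝ E] (m : ℕ) (V : Submodule ℝ E)
    (hV : m + 1 ≤ Module.finrank ℝ V) (G : Fin m → E → ℝ) (hG : ∀ i, Continuous (G i))
    (hodd : ∀ i x, G i (-x) = - G i x) : ∃ x ∈ V, ‖x‖ = 1 ∧ ∀ i, G i x = 0 := by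
  classical
  set b := stdOrthonormalBasis ℝ V
  set d := Module.finrank ℝ V with hd
  let e : ℕ → E := fun i => if h : i < d then (b ⟨i, h⟩ : E) else 0
  have hei : ∀ i (h : i < d), e i = (b ⟨i, h⟩ : E) := fun i h => by simp [e, h]
  have he : ∀ i ≤ m, ‖e i‖ = 1 := by
    intro i hi
    rw [hei i (by omega)]
    exact b.orthonormal.1 _
  have hee : ∀ i j, i ≤ m → j ≤ m → i ≠ j → ⟪e i, e j⟫ = 0 := by
    intro i j hi hj hij
    rw [hei i (by omega), hei j (by omega)]
    have := b.orthonormal.2 (i := ⟨i, by omega⟩) (j := ⟨j, by omega⟩) (by simpa using hij)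
    exact this
  have heV : ∀ i ≤ m, e i ∈ V := by
    intro i hi
    rw [hei i (by omega)]
    exact (b _).2
  have hsg : ∀ i : ℕ, ∃ s : E → ZMod 2, (∀ x, ‖x‖ = 1 → s (-x) = s x + 1) ∧
      ∀ h : i < m, ∀ x y, s x ≠ s y → G ⟨i, h⟩ x * G ⟨i, h⟩ y ≤ 0 := by
    intro i
    by_cases h : i < m
    · obtain ⟨s, h1, h2⟩ := exists_sign (G ⟨i, h⟩) (hodd _)
      exact ⟨s, h1, fun _ => h2⟩
    · obtain ⟨s, h1, h2⟩ := exists_sign (fun _ : E => (0 : ℝ)) (by simp)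
      exact ⟨s, h1, fun h' => absurd h' h⟩
  choose s hs1 hs2 using hsg
  by_contra! hcon
  set S : Set E := Metric.sphere 0 1 ∩ V with hS
  have hSc : IsCompact S := (isCompact_sphere 0 1).inter_right V.closed_of_finiteDimensional
  have hSne : S.Nonempty := ⟨e 0, by simpa using he 0 (by omega), heV 0 (by omega)⟩
  have hGc : Continuous (fun x => (fun i => G i x : Fin m → ℝ)) := continuous_pi hG
  obtain ⟨x0, hx0, hmin⟩ := hSc.exists_isMinOn hSne hGc.norm.continuousOn
  set μ := ‖(fun i => G i x0 : Fin m → ℝ)‖ with hμ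
  have hμ0 : 0 < μ := by
    rw [hμ, norm_pos_iff]
    intro h
    obtain ⟨i, hi⟩ := hcon x0 hx0.2 (by simpa using hx0.1)
    exact hi (congrFun h i)
  have huc := hSc.uniformContinuousOn_of_continuous hGc.continuousOn
  rw [Metric.uniformContinuousOn_iff] at huc
  obtain ⟨δ, hδ, huc⟩ := huc (μ / 2) (by positivity)
  obtain ⟨c, hc1, -, hc3⟩ := step m e he hee V heV s hs1 m le_rfl δ hδ
  have : ∃ u ∈ c, W s u ≠ 0 := by
    by_contra! h
    rw [ev_congr c _ (fun _ => 0) h] at hc3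
    simp [ev] at hc3
  obtain ⟨u, hu, hW⟩ := this
  obtain ⟨hl, hm, hdist⟩ := hc1 u hu
  obtain ⟨z, hz⟩ : ∃ z, z ∈ u := List.exists_mem_of_length_pos (by omega)
  have hmS : ∀ x ∈ u, x ∈ S := fun x hx => ⟨by simpa using (hm x hx).1, (hm x hx).2.1⟩
  have hcl : ∀ i, ∀ x ∈ u, ∀ y ∈ u, |G i x - G i y| < μ / 2 := by
    intro i x hx y hy
    have := huc x (hmS x hx) y (hmS y hy) (hdist x hx y hy)
    exact lt_of_le_of_lt (dist_le_pi_dist (fun i => G i x) (fun i => G i y) i) this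
  have hlt : ‖(fun i => G i z : Fin m → ℝ)‖ < μ := by
    rw [pi_norm_lt_iff hμ0]
    intro i
    obtain ⟨x, hx, y, hy, hxy⟩ := W_ne s u hW i (by omega)
    have h1 := hs2 i i.2 x y hxy
    simp only [Fin.eta] at h1
    have h2 := abs_lt.1 (hcl i x hx y hy)
    have h3 := abs_lt.1 (hcl i z hz x hx)
    have h4 := abs_lt.1 (hcl i z hz y hy)
    rw [Real.norm_eq_abs, abs_lt]
    constructor
    · by_contra! h
      have a1 : G i x < 0 := by linarith
      have a2 : G i y < 0 := by linarith
      nlinarith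
    · by_contra! h
      have a1 : 0 < G i x := by linarith
      have a2 : 0 < G i y := by linarith
      nlinarith
  exact absurd (hmin (hmS z hz)) (not_le.2 hlt)

lemma pair [FiniteDimensional ℝ E] (m : ℕ) (V : Submodule ℝ E)
    (hV : m + 2 ≤ Module.finrank ℝ V) (f : Fin m → E → ℝ) (hf : ∀ i, Continuous (f i)) :
    ∃ v ∈ V, ∃ w ∈ V, ‖v‖ = 1 ∧ ‖w‖ = 1 ∧ ⟪v, w⟫ = 0 ∧ ∀ i, f i v = f i w := by
  obtain ⟨a, haV, ha, -⟩ := borsuk_ulam (m := 0) V (by omega) (fun i => i.elim0)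
    (fun i => i.elim0) (fun i => i.elim0)
  have hdim : m + 1 ≤ Module.finrank ℝ ((ℝ ∙ a)ᗮ ⊓ V : Submodule ℝ E) := by
    have hle : (ℝ ∙ a) ≤ V := by simpa using haV
    have h1 := Submodule.finrank_add_inf_finrank_orthogonal hle
    have h2 : Module.finrank ℝ (ℝ ∙ a) = 1 := finrank_span_singleton (by
      rintro rfl; simp at ha)
    omega
  set r : ℝ := (√2)⁻¹ with hr
  have hr2 : r * r = 1 / 2 := by
    rw [hr, ← mul_inv, Real.mul_self_sqrt (by norm_num)]; norm_num
  obtain ⟨b, hbV, hb, hG⟩ := borsuk_ulam m ((ℝ ∙ a)ᗮ ⊓ V) hdim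
    (fun i x => f i (r • (a + x)) - f i (r • (a - x)))
    (fun i => by have := hf i; fun_prop)
    (fun i x => by simp [sub_eq_add_neg])
  have hab : ⟪a, b⟫ = 0 := Submodule.mem_orthogonal_singleton_iff_inner_right.1 hbV.1
  have hba : ⟪b, a⟫ = 0 := by rw [real_inner_comm]; exact hab
  have key : ∀ x : E, ⟪x, x⟫ = 1 → ‖x‖ = 1 := by
    intro x hx
    rw [real_inner_self_eq_norm_mul_norm] at hx
    nlinarith [norm_nonneg x]
  have haa : ⟪a, a⟫ = 1 := by rw [real_inner_self_eq_norm_mul_norm, ha]; norm_num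
  have hbb : ⟪b, b⟫ = 1 := by rw [real_inner_self_eq_norm_mul_norm, hb]; norm_num
  refine ⟨r • (a + b), V.smul_mem _ (V.add_mem haV hbV.2), r • (a - b),
    V.smul_mem _ (V.sub_mem haV hbV.2), key _ ?_, key _ ?_, ?_, fun i => sub_eq_zero.1 (hG i)⟩
  all_goals
    simp only [real_inner_smul_left, real_inner_smul_right, inner_add_left, inner_add_right,
      inner_sub_left, inner_sub_right, haa, hbb, hab, hba]
    linarith

end

lemma dirWidth_cont {n : ℕ} (K : Set (EuclideanSpace ℝ (Fin n))) (hK : IsCompact K) :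
    Continuous (dirWidth K) := by
  have h : Continuous ↿(fun v x : EuclideanSpace ℝ (Fin n) => ⟪x, v⟫) := by
    simp only [Function.HasUncurry.uncurry, id]
    fun_prop
  exact (hK.continuous_sSup h).sub (hK.continuous_sInf h)

end BU

/-- Given `⌊n/2⌋ - 2` nonempty compact convex regions in `ℝⁿ` (`n ≥ 4`), there exist
pairwise orthogonal unit vectors `v₁, v₂, v₃, v₄` such that each region has equal
widths in directions `v₁, v₂` and in directions `v₃, v₄`. -/
theorem squares_inscribe_two (n : ℕ) (hn : 4 ≤ n)
    (K : Fin (n / 2 - 2) → Set (EuclideanSpace ℝ (Fin n)))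
    (hne : ∀ i, (K i).Nonempty) (hcpt : ∀ i, IsCompact (K i))
    (hconv : ∀ i, Convex ℝ (K i)) :
    ∃ v : Fin 4 → EuclideanSpace ℝ (Fin n),
      (∀ i, ‖v i‖ = 1) ∧
      (∀ i j : Fin 4, i ≠ j → ⟪v i, v j⟫ = 0) ∧
      ∀ i, dirWidth (K i) (v 0) = dirWidth (K i) (v 1) ∧
           dirWidth (K i) (v 2) = dirWidth (K i) (v 3) := by
  have hc : ∀ i, Continuous (dirWidth (K i)) := fun i => BU.dirWidth_cont _ (hcpt i)
  have hfr : Module.finrank ℝ (EuclideanSpace ℝ (Fin n)) = n := by simp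
  obtain ⟨v, -, w, -, hv, hw, hvw, h1⟩ := BU.pair (n / 2 - 2)
    (⊤ : Submodule ℝ (EuclideanSpace ℝ (Fin n))) (by rw [finrank_top, hfr]; omega) _ hc
  set V := Submodule.span ℝ (Set.range ![v, w]) with hVdef
  have hV : Module.finrank ℝ V ≤ 2 := by
    exact (finrank_range_le_card (R := ℝ) ![v, w]).trans (by simp)
  have hVo := Submodule.finrank_add_finrank_orthogonal V
  obtain ⟨p, hpV, q, hqV, hp, hq, hpq, h2⟩ := BU.pair (n / 2 - 2) Vᗮ (by omega) _ hc
  have hvV : v ∈ V := Submodule.subset_span ⟨0, rfl⟩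
  have hwV : w ∈ V := Submodule.subset_span ⟨1, rfl⟩
  have o1 := Submodule.inner_right_of_mem_orthogonal hvV hpV
  have o2 := Submodule.inner_right_of_mem_orthogonal hvV hqV
  have o3 := Submodule.inner_right_of_mem_orthogonal hwV hpV
  have o4 := Submodule.inner_right_of_mem_orthogonal hwV hqV
  have o1' := Submodule.inner_left_of_mem_orthogonal hvV hpV
  have o2' := Submodule.inner_left_of_mem_orthogonal hvV hqV
  have o3' := Submodule.inner_left_of_mem_orthogonal hwV hpV
  have o4' := Submodule.inner_left_of_mem_orthogonal hwV hqV
  have hwv : ⟪w, v⟫ = 0 := by rw [real_inner_comm]; exact hvw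
  have hqp : ⟪q, p⟫ = 0 := by rw [real_inner_comm]; exact hpq
  refine ⟨![v, w, p, q], ?_, ?_, fun i => ⟨h1 i, h2 i⟩⟩
  · intro i; fin_cases i <;> simp [hv, hw, hp, hq]
  · intro i j hij
    fin_cases i <;> fin_cases j <;> first | exact absurd rfl hij | assumption
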